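/- Let N and n be positive integers, A : ℝ^N → ℝ^n a linear map, K ⊆ ℝ^n a compact set, and f, f_V, g : ℝ^n → ℝ^N continuous maps such that f(p) = f_V(p) + g(p) and A(g(p)) = 0 for all p ∈ K, and such that the map p ↦ A(f_V(p)) is injective on K. Then there exists a continuous map Ψ : ℝ^n → ℝ^N such that Ψ(A(f(p))) = f(p) for all p ∈ K; that is, the linear encoder A followed by the (generally nonlinear) continuous decoder Ψ reconstructs every point of the set f(K) exactly (null representation error). -/

import Mathlib

/-!
The encoder sees only the `fV` component, `A (f p) = A (fV p)` on `K`, so it is injective on the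
compact set `f '' K`. A continuous injection of a compact space into a Hausdorff space is a closed
embedding, so the inverse of the encoder on `A '' (f '' K)` is continuous, and Tietze's theorem
extends it to a continuous decoder.
-/

open Set Topology

universe u

theorem exists_continuousMap_leftInvOn_of_isCompact_of_injOn
    {E : Type*} [TopologicalSpace E] {F : Type u} [TopologicalSpace F] [T4Space F]
    [TietzeExtension.{u} E] {e : E → F} {M : Set E} (hM : IsCompact M)
    (he : ContinuousOn e M) (hinj : InjOn e M) :
    ∃ Ψ : C(F, E), LeftInvOn Ψ e M := by
  have : CompactSpace M := isCompact_iff_compactSpace.mp hM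
  have hemb : IsClosedEmbedding (M.domRestrict e) :=
    he.domRestrict.isClosedEmbedding hinj.injective
  obtain ⟨Ψ, hΨ⟩ := ContinuousMap.exists_extension' hemb ⟨Subtype.val, continuous_subtype_val⟩
  exact ⟨Ψ, fun x hx => congrFun hΨ ⟨x, hx⟩⟩

theorem injOn_image_of_eq_add_of_map_eq_zero {𝓕 E F X : Type*} [Add E] [AddZeroClass F]
    [FunLike 𝓕 E F] [AddHomClass 𝓕 E F] (A : 𝓕) {K : Set X} {f fV g : X → E}
    (hdecomp : ∀ p ∈ K, f p = fV p + g p) (hann : ∀ p ∈ K, A (g p) = 0)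
    (hinj : InjOn (fun p => A (fV p)) K) : InjOn A (f '' K) := by
  have hA_eq : EqOn (fun p => A (fV p)) (A ∘ f) K := fun p hp => by
    simp [hdecomp p hp, hann p hp]
  exact (hinj.congr hA_eq).image_of_comp

theorem linear_encoder_nonlinear_decoder_null_representation_error_general
    {R : Type*} [Semiring R] {E : Type*} [AddCommMonoid E] [Module R E] [TopologicalSpace E]
    {F : Type u} [AddCommMonoid F] [Module R F] [TopologicalSpace F] [T4Space F]
    [TietzeExtension.{u} E] {X : Type*} [TopologicalSpace X] {K : Set X} (hK : IsCompact K)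
    (A : E →L[R] F) {f fV g : X → E} (hf : ContinuousOn f K)
    (hdecomp : ∀ p ∈ K, f p = fV p + g p) (hann : ∀ p ∈ K, A (g p) = 0)
    (hinj : InjOn (fun p => A (fV p)) K) :
    ∃ Ψ : C(F, E), ∀ p ∈ K, Ψ (A (f p)) = f p := by
  have hA_inj : InjOn A (f '' K) := injOn_image_of_eq_add_of_map_eq_zero A hdecomp hann hinj
  obtain ⟨Ψ, hΨ⟩ := exists_continuousMap_leftInvOn_of_isCompact_of_injOn
    (hK.image_of_continuousOn hf) A.continuous.continuousOn hA_inj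
  exact ⟨Ψ, fun p hp => hΨ (mem_image_of_mem f hp)⟩

/-- A linear encoder `A` followed by a (generally nonlinear) continuous decoder `Ψ`
reconstructs every point of the manifold `f(K)` exactly (null representation error),
provided `f = f_V + g` on `K`, `A` annihilates `g` on `K`, and `p ↦ A (f_V p)` is
injective on `K`. -/
theorem linear_encoder_nonlinear_decoder_null_representation_error
    (N n : ℕ) (hN : 0 < N) (hn : 0 < n)
    (A : EuclideanSpace ℝ (Fin N) →ₗ[ℝ] EuclideanSpace ℝ (Fin n))
    (K : Set (EuclideanSpace ℝ (Fin n))) (hK : IsCompact K)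
    (f fV g : EuclideanSpace ℝ (Fin n) → EuclideanSpace ℝ (Fin N))
    (hf : Continuous f) (hfV : Continuous fV) (hg : Continuous g)
    (hdecomp : ∀ p ∈ K, f p = fV p + g p)
    (hann : ∀ p ∈ K, A (g p) = 0)
    (hinj : Set.InjOn (fun p => A (fV p)) K) :
    ∃ Ψ : EuclideanSpace ℝ (Fin n) → EuclideanSpace ℝ (Fin N),
      Continuous Ψ ∧ ∀ p ∈ K, Ψ (A (f p)) = f p := by
  obtain ⟨Ψ, hΨ⟩ := linear_encoder_nonlinear_decoder_null_representation_error_general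
    hK A.toContinuousLinearMap hf.continuousOn hdecomp hann hinj
  exact ⟨Ψ, Ψ.continuous, hΨ⟩
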